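/- arXiv:2605.21999 — 3 statements merged into one kernel-verified Lean document; each statement's English description precedes it below -/
import Mathlib

section
/- For every filter r ∈ [m] and every iteration t ≥ 0, the signal coordinate w_{r,1}^{(t)} is monotonically non-decreasing, and its one-step increment satisfies (3η(α−ε)³/N)·(w_{r,1}^{(t)})²·Σ_{i∈S_L} ψ(y_i f_{W^{(t)}}(X̃_i^{(t)})) ≤ w_{r,1}^{(t+1)} − w_{r,1}^{(t)} ≤ (3ηα³/N)·(w_{r,1}^{(t)})²·Σ_{i∈S_L} ψ(y_i f_{W^{(t)}}(X̃_i^{(t)})). -/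
open Finset MeasureTheory ProbabilityTheory
open scoped ENNReal NNReal

noncomputable section

namespace AD

/-- Cubic ReLU activation. -/
def phi (z : ℝ) : ℝ := (max 0 z) ^ 3

/-- Negative sigmoid `ψ(z) = 1/(1+e^z)`. -/
def psi (z : ℝ) : ℝ := 1 / (1 + Real.exp z)

/-- Logistic loss `ℓ(z) = log(1+e^{-z})`. -/
def lloss (z : ℝ) : ℝ := Real.log (1 + Real.exp (-z))

/-- Logistic sigmoid `σ(z) = 1/(1+e^{-z})`. -/
def sigm (z : ℝ) : ℝ := 1 / (1 + Real.exp (-z))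

/-- Euclidean inner product on `Fin d → ℝ`. -/
def dot {d : ℕ} (a b : Fin d → ℝ) : ℝ := ∑ k, a k * b k

/-- Squared Euclidean norm. -/
def sqnorm {d : ℕ} (a : Fin d → ℝ) : ℝ := dot a a

/-- First standard basis vector `e₁` (the learnable feature `u`). -/
def e1 (d : ℕ) (hd : 0 < d) : Fin d → ℝ := fun k => if k = (⟨0, hd⟩ : Fin d) then 1 else 0

/-- Last standard basis vector `e_d` (the unlearnable feature `v`). -/
def eLast (d : ℕ) (_hd : 0 < d) : Fin d → ℝ := fun k => if (k : ℕ) = d - 1 then 1 else 0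

/-- The two-layer student network
`f_W(X) = ∑_r ∑_p [φ(⟨w_r,x_p⟩) − φ(−⟨w_r,x_p⟩)]`. -/
def netOut {m P d : ℕ} (w : Fin m → Fin d → ℝ) (X : Fin P → Fin d → ℝ) : ℝ :=
  ∑ r, ∑ p, (phi (dot (w r) (X p)) - phi (-(dot (w r) (X p))))

/-- The concentration event `E` of the paper, i.e. properties (P1)–(P8), stated for
training patches `x`, initialization `w0`, labels `y` and signal-patch indices `sig`. -/
def EventEOn (N m P d : ℕ) (hd : 0 < d) (sigman sigma0 delta : ℝ)
    (y : Fin N → ℝ) (sig : Fin N → Fin P)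
    (x : Fin N → Fin P → Fin d → ℝ) (w0 : Fin m → Fin d → ℝ) : Prop :=
  -- (P1) noise-patch norms
  (∀ i j, j ≠ sig i →
      sigman ^ 2 * d / 2 ≤ sqnorm (x i j) ∧ sqnorm (x i j) ≤ 3 * sigman ^ 2 * d / 2) ∧
  -- (P2) pairwise noise inner products
  (∀ i k j q, j ≠ sig i → q ≠ sig k → ((i, j) : Fin N × Fin P) ≠ (k, q) →
      |dot (x i j) (x k q)| ≤
        2 * sigman ^ 2 * Real.sqrt ((d : ℝ) * Real.log ((16 : ℝ) * N ^ 2 * P ^ 2 / delta))) ∧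
  -- (P3) sup-norm of noise patches
  (∀ i j, j ≠ sig i → ∀ kk : Fin d,
      |x i j kk| ≤ sigman * Real.sqrt (2 * Real.log ((16 : ℝ) * d * N * P / delta))) ∧
  -- (P4) initialization norms
  (∀ r, Real.sqrt (sqnorm (w0 r)) ≤ 2 * sigma0 * Real.sqrt d) ∧
  -- (P5) initialization signal correlation
  (∀ r, |dot (w0 r) (e1 d hd)| ≤ sigma0 * Real.sqrt (2 * Real.log ((16 : ℝ) * m / delta))) ∧
  -- (P6) initialization noise correlations
  (∀ r i j, j ≠ sig i →
      |dot (w0 r) (x i j)| ≤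
        2 * sigma0 * sigman * Real.sqrt ((d : ℝ) * Real.log ((16 : ℝ) * N * m * P / delta))) ∧
  -- (P7) maximal initial signal alignment
  (∃ r, sigma0 / 2 ≤ dot (w0 r) (e1 d hd)) ∧
  -- (P8) maximal initial noise alignment
  (∀ i j, j ≠ sig i → ∃ r, sigma0 * sigman * Real.sqrt d / 4 ≤ y i * dot (w0 r) (x i j))
structure Setting where
  N : ℕ
  m : ℕ
  P : ℕ
  d : ℕ
  T : ℕ
  hN : 0 < N
  hm : 0 < m
  hP : 0 < P
  hd : 0 < d
  alpha : ℝ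
  sigman : ℝ
  sigma0 : ℝ
  eta : ℝ
  eps : ℝ
  delta : ℝ
  halpha : 0 < alpha
  hsigman : 0 < sigman
  hsigma0 : 0 < sigma0
  heta : 0 < eta
  heps : 0 < eps
  hepsalpha : eps < alpha
  hdelta0 : 0 < delta
  hdelta1 : delta < 1
  /-- labels -/
  y : Fin N → ℝ
  hy : ∀ i, y i = 1 ∨ y i = -1
  /-- signal patch index -/
  sig : Fin N → Fin P
  /-- learnable samples -/
  SL : Finset (Fin N)
  /-- unlearnable samples -/
  SU : Finset (Fin N)
  hunion : SL ∪ SU = Finset.univ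
  hdisj : Disjoint SL SU
  /-- training patches -/
  x : Fin N → Fin P → Fin d → ℝ
  hsigL : ∀ i ∈ SL, x i (sig i) = (alpha * y i) • e1 d hd
  hsigU : ∀ i ∈ SU, x i (sig i) = (alpha * y i) • eLast d hd
  hnoiseU : ∀ i j, j ≠ sig i → dot (x i j) (e1 d hd) = 0
  hnoiseV : ∀ i j, j ≠ sig i → dot (x i j) (eLast d hd) = 0
  /-- weight trajectory -/
  w : ℕ → Fin m → Fin d → ℝ
  hwperp : ∀ t r, dot (w t r) (eLast d hd) = 0
  /-- adversarial training examples at each iteration -/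
  xadv : ℕ → Fin N → Fin P → Fin d → ℝ
  hadvnoise : ∀ t i j, j ≠ sig i → xadv t i j = x i j
  hadvspan : ∀ t i, ∃ c : ℝ, xadv t i (sig i) - x i (sig i) = c • x i (sig i)
  hadvlinf : ∀ t i p k, |xadv t i p k - x i p k| ≤ eps
  hadvlearn : ∀ t : ℕ, ∀ i ∈ SL,
    alpha - eps ≤ y i * dot (xadv t i (sig i)) (e1 d hd) ∧
      y i * dot (xadv t i (sig i)) (e1 d hd) ≤ alpha

namespace Setting

variable (S : Setting)

/-- Adversarial margin `y_i f_{W^{(t)}}(X̃_i^{(t)})`. -/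
def marg (t : ℕ) (i : Fin S.N) : ℝ := S.y i * netOut (S.w t) (S.xadv t i)

/-- Signal coordinate `w_{r,1}^{(t)}`. -/
def wsig (t : ℕ) (r : Fin S.m) : ℝ := S.w t r ⟨0, S.hd⟩

/-- Unlearnable fraction `p_un = |S_U|/N`. -/
def pun : ℝ := (S.SU.card : ℝ) / S.N

/-- The adversarial-training gradient-descent dynamics. -/
def ATDyn : Prop :=
  ∀ t r, S.w (t + 1) r = S.w t r +
    (3 * S.eta / S.N) •
      ∑ i : Fin S.N, (psi (S.marg t i) * S.y i) •
        ∑ p : Fin S.P, (dot (S.w t r) (S.xadv t i p)) ^ 2 • S.xadv t i p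

/-- The signed gradient weight of sample `i` at iteration `t` under adversarial
distillation from teacher logits `fT`. -/
def gAD (fT : Fin S.N → ℝ) (t : ℕ) (i : Fin S.N) : ℝ :=
  sigm (S.y i * fT i) * psi (S.marg t i) - sigm (-(S.y i * fT i)) * psi (-(S.marg t i))

/-- The adversarial-distillation gradient-descent dynamics. -/
def ADDyn (fT : Fin S.N → ℝ) : Prop :=
  ∀ t r, S.w (t + 1) r = S.w t r +
    (3 * S.eta / S.N) •
      ∑ i : Fin S.N, (S.gAD fT t i * S.y i) •
        ∑ p : Fin S.P, (dot (S.w t r) (S.xadv t i p)) ^ 2 • S.xadv t i p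

/-- Noise coefficients `ρ_{i,j,r}^{(t)}` (adversarial training). -/
def rho (i : Fin S.N) (j : Fin S.P) (r : Fin S.m) : ℕ → ℝ
  | 0 => 0
  | t + 1 => rho i j r t + (3 * S.eta / S.N) * psi (S.marg t i) * (dot (S.w t r) (S.x i j)) ^ 2

/-- Noise coefficients under adversarial distillation. -/
def rhoAD (fT : Fin S.N → ℝ) (i : Fin S.N) (j : Fin S.P) (r : Fin S.m) : ℕ → ℝ
  | 0 => 0
  | t + 1 => rhoAD fT i j r t + (3 * S.eta / S.N) * S.gAD fT t i * (dot (S.w t r) (S.x i j)) ^ 2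

/-- The event `E` for a setting. -/
def EventE : Prop :=
  EventEOn S.N S.m S.P S.d S.hd S.sigman S.sigma0 S.delta S.y S.sig S.x (S.w 0)

/-- Condition (H): the parameter requirements of Condition 4.1 of the paper
(without the unlearnable-fraction regime item, which is imposed separately). -/
def CondH (C : ℝ) : Prop :=
  1 ≤ C ∧
  -- training horizon
  C * S.N / (S.eta * S.sigma0 * S.sigman ^ 3 * ((S.d : ℝ) * Real.sqrt S.d)) ≤ (S.T : ℝ) ∧
  -- dimension
  C * S.m ^ 2 * S.P ^ 2 * S.N ^ 2 *
      (Real.log ((S.T : ℝ) * S.N * S.m * S.P / S.delta)) ^ 4 ≤ (S.d : ℝ) ∧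
  -- signal strength
  C * S.sigman * Real.sqrt S.d * Real.log ((S.T : ℝ) * S.N * S.m * S.P / S.delta) /
      (((S.N : ℝ) * (1 - S.pun)) ^ ((1 : ℝ) / 3)) ≤ S.alpha ∧
  -- initialization scale
  S.sigma0 ≤
    C⁻¹ *
        min (min (1 / ((S.m : ℝ) ^ ((2 : ℝ) / 3) * (S.P : ℝ) ^ ((2 : ℝ) / 3) *
            S.sigman * Real.sqrt S.d))
          (1 / (S.alpha * (S.m : ℝ) ^ ((2 : ℝ) / 3))))
          (1 / (S.sigman * S.m ^ 2 * Real.sqrt S.P * S.d)) /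
      Real.log ((S.T : ℝ) * S.d * S.N * S.m * S.P / S.delta) ∧
  -- learning rate
  S.eta ≤
    C⁻¹ * min (min (1 / (S.alpha ^ 3 * S.sigma0)) (1 / (S.sigman ^ 2 * S.d))) (1 / S.alpha ^ 2) /
      Real.log ((S.T : ℝ) * S.N * S.m * S.P / S.delta) ∧
  -- adversarial budget
  C * S.sigman * S.m * Real.sqrt S.P * Real.log ((S.T : ℝ) * S.d * S.N * S.P / S.delta) ≤ S.eps ∧
  S.eps < C⁻¹ * min S.alpha (1 / (S.m * S.sigma0 * S.d)) ∧
  -- width and number of patches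
  C * Real.log ((S.N : ℝ) * S.P / S.delta) ≤ (S.m : ℝ) ∧
  (S.m : ℝ) ≤ C * Real.log S.d ^ C ∧
  2 ≤ S.P ∧ (S.P : ℝ) ≤ C

/-- The sparse-unlearnable regime of Condition 4.1. -/
def SparseRegime (C : ℝ) : Prop :=
  C / S.N ≤ S.pun ∧ S.pun ≤ C⁻¹ * Real.log S.d / S.N ∧
  C * S.m * S.P * Real.log ((S.T : ℝ) * S.d * S.N * S.m * S.P / S.delta) ≤ (S.N : ℝ)

/-- The noise-stability bound (NS) on learnable samples at iteration `t`. -/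
def NS (t : ℕ) : Prop :=
  ∀ r : Fin S.m, ∀ i ∈ S.SL, ∀ j, j ≠ S.sig i →
    |dot (S.w t r) (S.x i j)| ≤
      3 * S.sigma0 * S.sigman *
          Real.sqrt ((S.d : ℝ) * Real.log ((16 : ℝ) * S.N * S.m * S.P / S.delta)) +
        21 * S.pun * S.N * S.P * Real.log S.T ^ ((1 : ℝ) / 3) / Real.sqrt S.d *
          Real.sqrt (Real.log ((16 : ℝ) * S.N ^ 2 * S.P ^ 2 / S.delta))

/-- The signal-learning hitting time `T₀`. -/
def T0 (C0 : ℝ) : ℕ :=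
  sInf {t : ℕ | ∃ r, C0 / (S.alpha * (S.m : ℝ) ^ ((1 : ℝ) / 3)) < S.wsig t r}

/-- Maximum of the noise coefficients over unlearnable noise patches. -/
def rhoMaxSU (t : ℕ) : ℝ :=
  sSup {z : ℝ | ∃ r : Fin S.m, ∃ k ∈ S.SU, ∃ q, q ≠ S.sig k ∧ z = S.rho k q r t}

/-- Shifted noise coefficients `ρ̂_{i,j,r}^{(t)}`. -/
def rhoHat (i : Fin S.N) (j : Fin S.P) (r : Fin S.m) (t : ℕ) : ℝ :=
  S.rho i j r t + S.y i * dot (S.w 0 r) (S.x i j) / sqnorm (S.x i j)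

/-- Maximum shifted noise coefficient over unlearnable noise patches. -/
def rhoHatMax (t : ℕ) : ℝ :=
  sSup {z : ℝ | ∃ r : Fin S.m, ∃ k ∈ S.SU, ∃ q, q ≠ S.sig k ∧ z = S.rhoHat k q r t}

/-- The noise-memorization hitting time `T₁`. -/
def T1 (C1 : ℝ) : ℕ :=
  sInf {t : ℕ | C1 / (((S.m : ℝ) * S.P) ^ ((1 : ℝ) / 3) * S.sigman ^ 2 * S.d) < S.rhoHatMax t}

/-- The Good-Teacher horizon `T_max`. -/
def Tmax : ℝ :=
  S.N / (1000 * S.eta * S.m * S.P * S.sigma0 ^ 4 * S.sigman ^ 6 * (S.d : ℝ) ^ 3 *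
    Real.log ((16 : ℝ) * S.N * S.m * S.P / S.delta) ^ 2)

end Setting

theorem psi_pos (z : ℝ) : 0 < psi z := by
  unfold psi
  positivity

theorem dot_smul_right {d : ℕ} (a b : Fin d → ℝ) (c : ℝ) : dot a (c • b) = c * dot a b := by
  simp only [dot, Pi.smul_apply, smul_eq_mul, Finset.mul_sum]
  exact Finset.sum_congr rfl fun k _ => by ring

theorem dot_e1 {d : ℕ} (hd : 0 < d) (a : Fin d → ℝ) : dot a (e1 d hd) = a ⟨0, hd⟩ := by
  simp [dot, e1]

namespace Setting

/-- The adversarial signal patch is a multiple of the clean one. -/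
theorem exists_xadv_sig_eq_smul (S : Setting) (t : ℕ) (i : Fin S.N) :
    ∃ c : ℝ, S.xadv t i (S.sig i) = c • S.x i (S.sig i) := by
  obtain ⟨c, hc⟩ := S.hadvspan t i
  exact ⟨c + 1, by rw [add_smul, one_smul, ← hc, sub_add_cancel]⟩

/-- Noise patches have no component along the learnable feature. -/
theorem xadv_noise_zero (S : Setting) (t : ℕ) (i : Fin S.N) {p : Fin S.P} (hp : p ≠ S.sig i) :
    S.xadv t i p ⟨0, S.hd⟩ = 0 := by
  rw [S.hadvnoise t i p hp, ← dot_e1 S.hd (S.x i p), S.hnoiseU i p hp]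

/-- Filters do not respond to the adversarial signal patch of an unlearnable sample. -/
theorem dot_xadv_unlearnable (S : Setting) (t : ℕ) (r : Fin S.m) {i : Fin S.N} (hi : i ∈ S.SU) :
    dot (S.w t r) (S.xadv t i (S.sig i)) = 0 := by
  obtain ⟨c, hc⟩ := S.exists_xadv_sig_eq_smul t i
  rw [hc, S.hsigU i hi, dot_smul_right, dot_smul_right, S.hwperp t r, mul_zero, mul_zero]

/-- The adversarial signal patch of a learnable sample is supported on the first coordinate. -/
theorem dot_xadv_learnable (S : Setting) (t : ℕ) (r : Fin S.m) {i : Fin S.N} (hi : i ∈ S.SL) :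
    dot (S.w t r) (S.xadv t i (S.sig i)) = S.wsig t r * S.xadv t i (S.sig i) ⟨0, S.hd⟩ := by
  obtain ⟨c, hc⟩ := S.exists_xadv_sig_eq_smul t i
  rw [hc, S.hsigL i hi, dot_smul_right, dot_smul_right, dot_e1]
  simp only [wsig, Pi.smul_apply, smul_eq_mul, e1, if_true]
  ring

/-- Only the signal patches of learnable samples contribute to the update of `w_{r,1}`. -/
theorem wsig_succ_sub (S : Setting) (hdyn : S.ATDyn) (r : Fin S.m) (t : ℕ) :
    S.wsig (t + 1) r - S.wsig t r = 3 * S.eta / S.N * ∑ i ∈ S.SL, psi (S.marg t i) *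
      ((S.wsig t r) ^ 2 * (S.y i * S.xadv t i (S.sig i) ⟨0, S.hd⟩) ^ 3) := by
  have hpatch (i : Fin S.N) :
      ∑ p, (dot (S.w t r) (S.xadv t i p)) ^ 2 * S.xadv t i p ⟨0, S.hd⟩ =
        (dot (S.w t r) (S.xadv t i (S.sig i))) ^ 2 * S.xadv t i (S.sig i) ⟨0, S.hd⟩ :=
    Finset.sum_eq_single _ (fun p _ hp => by rw [S.xadv_noise_zero t i hp, mul_zero])
      (fun h => absurd (Finset.mem_univ _) h)
  have hstep : S.wsig (t + 1) r - S.wsig t r = 3 * S.eta / S.N * ∑ i, psi (S.marg t i) * S.y i *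
      ((dot (S.w t r) (S.xadv t i (S.sig i))) ^ 2 * S.xadv t i (S.sig i) ⟨0, S.hd⟩) := by
    simp only [wsig, hdyn t r, Pi.add_apply, Pi.smul_apply, Finset.sum_apply, smul_eq_mul, hpatch,
      add_sub_cancel_left]
  rw [hstep, ← S.hunion, Finset.sum_union S.hdisj,
    Finset.sum_eq_zero (s := S.SU) fun i hi => by rw [S.dot_xadv_unlearnable t r hi]; ring,
    add_zero]
  congr 1
  refine Finset.sum_congr rfl fun i hi => ?_
  rw [S.dot_xadv_learnable t r hi]
  rcases S.hy i with h | h <;> rw [h] <;> ring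

end Setting

/-- Signal weight update bounds. Under the AT dynamics, for every
filter `r` and iteration `t`, the signal coordinate `w_{r,1}^{(t)}` is monotonically
non-decreasing, with one-step increment bounded below and above as stated. -/
theorem stmt1 (S : Setting) (hdyn : S.ATDyn) (r : Fin S.m) (t : ℕ) :
    S.wsig t r ≤ S.wsig (t + 1) r ∧
    3 * S.eta * (S.alpha - S.eps) ^ 3 / S.N * (S.wsig t r) ^ 2 *
        ∑ i ∈ S.SL, psi (S.marg t i) ≤ S.wsig (t + 1) r - S.wsig t r ∧
    S.wsig (t + 1) r - S.wsig t r ≤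
      3 * S.eta * S.alpha ^ 3 / S.N * (S.wsig t r) ^ 2 * ∑ i ∈ S.SL, psi (S.marg t i) := by
  have hN : (0 : ℝ) < S.N := Nat.cast_pos.mpr S.hN
  have hη := S.heta
  have hε : 0 ≤ S.alpha - S.eps := (sub_pos.mpr S.hepsalpha).le
  have hinc := S.wsig_succ_sub hdyn r t
  have hbound : ∀ i ∈ S.SL, S.alpha - S.eps ≤ S.y i * S.xadv t i (S.sig i) ⟨0, S.hd⟩ ∧
      S.y i * S.xadv t i (S.sig i) ⟨0, S.hd⟩ ≤ S.alpha := fun i hi => by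
    simpa only [dot_e1] using S.hadvlearn t i hi
  have hconst (c : ℝ) : 3 * S.eta * c ^ 3 / S.N * (S.wsig t r) ^ 2 * ∑ i ∈ S.SL, psi (S.marg t i) =
      3 * S.eta / S.N * ∑ i ∈ S.SL, psi (S.marg t i) * ((S.wsig t r) ^ 2 * c ^ 3) := by
    rw [← Finset.sum_mul]
    ring
  have hlower : 3 * S.eta * (S.alpha - S.eps) ^ 3 / S.N * (S.wsig t r) ^ 2 *
      ∑ i ∈ S.SL, psi (S.marg t i) ≤ S.wsig (t + 1) r - S.wsig t r := by
    rw [hinc, hconst]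
    gcongr with i hi
    · exact (psi_pos _).le
    · exact (hbound i hi).1
  have hnonneg : 0 ≤ 3 * S.eta * (S.alpha - S.eps) ^ 3 / S.N * (S.wsig t r) ^ 2 *
      ∑ i ∈ S.SL, psi (S.marg t i) :=
    mul_nonneg (by positivity) (Finset.sum_nonneg fun i _ => (psi_pos _).le)
  refine ⟨sub_nonneg.mp (hnonneg.trans hlower), hlower, ?_⟩
  rw [hinc, hconst]
  gcongr with i hi
  · exact (psi_pos _).le
  · exact hε.trans (hbound i hi).1
  · exact (hbound i hi).2

end AD

end
end

section
/- Define coefficients ρ_{i,j,r}^{(0)} = 0 and ρ_{i,j,r}^{(t+1)} − ρ_{i,j,r}^{(t)} = (3η/N)·ψ(y_i f_{W^{(t)}}(X̃_i^{(t)}))·⟨w_r^{(t)}, x_{i,j}⟩² for every filter r ∈ [m], every noise patch (i,j) with i ∈ [N], j ≠ s(X_i), and every iteration t ≥ 0. Then each ρ_{i,j,r}^{(t)} is monotonically non-decreasing in t, and for every t ≥ 0 the gradient-descent iterates satisfy the exact decomposition ⟨w_r^{(t)}, x_{i,j}⟩ = ⟨w_r^{(0)}, x_{i,j}⟩ + y_i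 ρ_{i,j,r}^{(t)} ‖x_{i,j}‖₂² + Σ_{(k,q) ≠ (i,j)} y_k ρ_{k,q,r}^{(t)} ⟨x_{k,q}, x_{i,j}⟩, where the sum ranges over all noise patches (k,q) with k ∈ [N], q ≠ s(X_k), distinct from (i,j). -/
open Finset MeasureTheory ProbabilityTheory
open scoped ENNReal NNReal

noncomputable section

namespace AD

theorem psi_nonneg (z : ℝ) : 0 ≤ psi z := by
  unfold psi
  positivity

theorem dot_eq_dotProduct {d : ℕ} (a b : Fin d → ℝ) : dot a b = a ⬝ᵥ b := rfl

namespace Setting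

variable (S : Setting)

theorem rho_monotone (i : Fin S.N) (j : Fin S.P) (r : Fin S.m) : Monotone (S.rho i j r) := by
  refine monotone_nat_of_le_succ fun t => ?_
  have heta := S.heta
  have hpsi := psi_nonneg (S.marg t i)
  exact le_add_of_nonneg_right (by positivity)

/-- Noise patches are orthogonal to every adversarial signal patch. -/
theorem dot_xadv_sig_noise (t : ℕ) (k i : Fin S.N) {j : Fin S.P} (hj : j ≠ S.sig i) :
    dot (S.xadv t k (S.sig k)) (S.x i j) = 0 := by
  obtain ⟨c, hc⟩ := S.hadvspan t k
  have hclean : dot (S.x k (S.sig k)) (S.x i j) = 0 := by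
    have hk : k ∈ S.SL ∪ S.SU := S.hunion ▸ Finset.mem_univ k
    have hu := S.hnoiseU i j hj
    have hv := S.hnoiseV i j hj
    rw [dot_eq_dotProduct, dotProduct_comm] at hu hv
    rcases Finset.mem_union.mp hk with h | h
    · rw [S.hsigL k h, dot_eq_dotProduct, smul_dotProduct, hu, smul_zero]
    · rw [S.hsigU k h, dot_eq_dotProduct, smul_dotProduct, hv, smul_zero]
  rw [dot_eq_dotProduct] at hclean ⊢
  rw [sub_eq_iff_eq_add.mp hc, add_dotProduct, smul_dotProduct, hclean, smul_zero, add_zero]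

variable {S}

/-- One adversarial-training step changes a noise response only through noise patches. -/
theorem ATDyn.dot_noise_succ (hdyn : S.ATDyn) (i : Fin S.N) {j : Fin S.P} (hj : j ≠ S.sig i)
    (r : Fin S.m) (t : ℕ) :
    dot (S.w (t + 1) r) (S.x i j) = dot (S.w t r) (S.x i j) +
      ∑ kq : Fin S.N × Fin S.P with kq.2 ≠ S.sig kq.1,
        S.y kq.1 * ((3 * S.eta / S.N) * psi (S.marg t kq.1) *
          (dot (S.w t r) (S.x kq.1 kq.2)) ^ 2) * dot (S.x kq.1 kq.2) (S.x i j) := by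
  rw [hdyn t r, dot_eq_dotProduct, add_dotProduct, smul_dotProduct, sum_dotProduct,
    Finset.sum_filter, Fintype.sum_prod_type, Finset.smul_sum]
  refine congrArg₂ (· + ·) rfl (Finset.sum_congr rfl fun k _ => ?_)
  rw [smul_dotProduct, sum_dotProduct, Finset.smul_sum, Finset.smul_sum]
  refine Finset.sum_congr rfl fun q _ => ?_
  rw [smul_dotProduct, ← dot_eq_dotProduct (S.xadv t k q)]
  by_cases hq : q = S.sig k
  · subst hq
    simp [S.dot_xadv_sig_noise t k i hj]
  · rw [if_pos hq, S.hadvnoise t k q hq]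
    simp only [smul_eq_mul]
    ring

/-- Noise responses decompose over all noise patches. -/
theorem ATDyn.dot_noise (hdyn : S.ATDyn) (i : Fin S.N) {j : Fin S.P} (hj : j ≠ S.sig i)
    (r : Fin S.m) (t : ℕ) :
    dot (S.w t r) (S.x i j) = dot (S.w 0 r) (S.x i j) +
      ∑ kq : Fin S.N × Fin S.P with kq.2 ≠ S.sig kq.1,
        S.y kq.1 * S.rho kq.1 kq.2 r t * dot (S.x kq.1 kq.2) (S.x i j) := by
  induction t with
  | zero => simp [rho]
  | succ t ih =>
    rw [hdyn.dot_noise_succ i hj, ih, add_assoc, ← Finset.sum_add_distrib]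
    simp only [rho, mul_add, add_mul]

end Setting

/-- Noise coefficient update rule. The coefficients `ρ_{i,j,r}^{(t)}`
are monotonically non-decreasing, and the iterates satisfy the exact decomposition of
the noise responses. -/
theorem stmt2 (S : Setting) (hdyn : S.ATDyn) (i : Fin S.N) (j : Fin S.P) (hj : j ≠ S.sig i)
    (r : Fin S.m) (t : ℕ) :
    S.rho i j r t ≤ S.rho i j r (t + 1) ∧
    dot (S.w t r) (S.x i j) =
      dot (S.w 0 r) (S.x i j) + S.y i * S.rho i j r t * sqnorm (S.x i j) +
        ∑ kq ∈ Finset.univ.filter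
            (fun kq : Fin S.N × Fin S.P => kq.2 ≠ S.sig kq.1 ∧ kq ≠ (i, j)),
          S.y kq.1 * S.rho kq.1 kq.2 r t * dot (S.x kq.1 kq.2) (S.x i j) := by
  refine ⟨S.rho_monotone i j r t.le_succ, ?_⟩
  have hmem : (i, j) ∈ Finset.univ.filter
      (fun kq : Fin S.N × Fin S.P => kq.2 ≠ S.sig kq.1) := by simpa using hj
  rw [hdyn.dot_noise i hj, ← Finset.add_sum_erase _ _ hmem, add_assoc, sqnorm]
  congr 3
  ext kq
  simp [and_comm]

end AD

end
end

section
/- On the event E, suppose the noise-stability bound (NS) holds at iteration t, and suppose the signal weights satisfy w_{r,1}^{(t)} ≤ C_0/(α m^{1/3}) for all filters r ∈ [m], where C_0 > 0 is a sufficiently large absolute constant. Then, under Condition (H), for every learnable sample i ∈ S_L the negative sigmoid of the adversarial margin satisfies 1/(1 + exp(2C_0³)) ≤ ψ(y_i f_{W^{(t)}}(X̃_i^{(t)})) ≤ 1. -/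
open Finset MeasureTheory ProbabilityTheory
open scoped ENNReal NNReal

noncomputable section

namespace AD

/-- The difference of cubic ReLUs at `z` and `-z` is the plain cube. -/
theorem phi_sub_phi_neg (z : ℝ) : phi z - phi (-z) = z ^ 3 := by
  unfold phi
  rcases le_total 0 z with h | h
  · rw [max_eq_right h, max_eq_left (by linarith)]; ring
  · rw [max_eq_left h, max_eq_right (by linarith)]; ring

theorem dot_smul_e1 {d : ℕ} (hd : 0 < d) (w : Fin d → ℝ) (k : ℝ) :
    dot w (k • e1 d hd) = k * w ⟨0, hd⟩ := by
  simp [dot, e1, mul_comm]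

theorem psi_le_one (z : ℝ) : psi z ≤ 1 := by
  unfold psi
  rw [div_le_one (by positivity)]
  linarith [Real.exp_pos z]

theorem psi_anti {a b : ℝ} (h : a ≤ b) : psi b ≤ psi a := by
  unfold psi
  gcongr

/-- For a sign `s = ±1`, a signed cube is the cube of the signed number. -/
theorem sign_mul_cube {s : ℝ} (hs : s = 1 ∨ s = -1) (z : ℝ) : s * z ^ 3 = (s * z) ^ 3 := by
  rcases hs with rfl | rfl <;> ring

theorem sqrt_le_three_mul {a b : ℝ} (hb : 2 / 3 ≤ b) (hab : a ≤ 6 * b) : √a ≤ 3 * b := by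
  rw [Real.sqrt_le_left (by linarith)]
  nlinarith

theorem cbrt_pow_three {a : ℝ} (ha : 0 ≤ a) : (a ^ ((1 : ℝ) / 3)) ^ 3 = a := by
  rw [← Real.rpow_natCast, ← Real.rpow_mul ha]
  norm_num

namespace Setting

variable (S : Setting)

theorem pun_mul_N_le : S.pun * S.N ≤ S.N := by
  have hN : (0 : ℝ) < S.N := by exact_mod_cast S.hN
  have h : S.SU.card ≤ S.N := by simpa using S.SU.card_le_univ
  unfold pun
  rw [div_mul_cancel₀ _ hN.ne']
  exact_mod_cast h

theorem pun_nonneg : 0 ≤ S.pun := by unfold pun; positivity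

/-- Under Condition (H), the noise-stability bound is at most `167 / (m P)^{1/3}`. -/
theorem noise_bound_le {C : ℝ} (h : S.CondH C) :
    3 * S.sigma0 * S.sigman *
          √((S.d : ℝ) * Real.log ((16 : ℝ) * S.N * S.m * S.P / S.delta)) +
        21 * S.pun * S.N * S.P * Real.log S.T ^ ((1 : ℝ) / 3) / √S.d *
          √(Real.log ((16 : ℝ) * S.N ^ 2 * S.P ^ 2 / S.delta)) ≤
      167 / ((S.m : ℝ) ^ ((1 : ℝ) / 3) * (S.P : ℝ) ^ ((1 : ℝ) / 3)) := by
  obtain ⟨hC, hT, hdim, -, hs0, -, -, -, -, -, hP2, hPC⟩ := h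
  have hN : (1 : ℝ) ≤ S.N := by exact_mod_cast S.hN
  have hm : (1 : ℝ) ≤ S.m := by exact_mod_cast S.hm
  have hd : (1 : ℝ) ≤ S.d := by exact_mod_cast S.hd
  have hP : (2 : ℝ) ≤ S.P := by exact_mod_cast hP2
  have hδ := S.hdelta0
  have hδ1 := S.hdelta1
  have hσ := S.hsigman
  have hσ0 := S.hsigma0
  have hη := S.heta
  have hT1 : (1 : ℝ) ≤ S.T := by
    have h0 : (0 : ℝ) < S.T := lt_of_lt_of_le (by positivity) hT
    have h1 : 0 < S.T := by exact_mod_cast h0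
    exact_mod_cast h1
  have hlog2 : (2 : ℝ) / 3 ≤ Real.log 2 := by linarith [Real.log_two_gt_d9]
  have hlog16 : Real.log 16 = 4 * Real.log 2 := by
    rw [show (16 : ℝ) = 2 ^ 4 by norm_num, Real.log_pow]; norm_num
  have lN := Real.log_nonneg hN
  have lm := Real.log_nonneg hm
  have ld := Real.log_nonneg hd
  have lT := Real.log_nonneg hT1
  have lP : Real.log 2 ≤ Real.log S.P := Real.log_le_log (by norm_num) hP
  have lδ : Real.log S.delta ≤ 0 := Real.log_nonpos hδ.le hδ1.le
  have hN0 : (S.N : ℝ) ≠ 0 := by positivity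
  have hm0 : (S.m : ℝ) ≠ 0 := by positivity
  have hd0 : (S.d : ℝ) ≠ 0 := by positivity
  have hP0 : (S.P : ℝ) ≠ 0 := by positivity
  have hT0 : (S.T : ℝ) ≠ 0 := by positivity
  have hL1 : Real.log ((S.T : ℝ) * S.d * S.N * S.m * S.P / S.delta) =
      Real.log S.T + Real.log S.d + Real.log S.N + Real.log S.m + Real.log S.P
        - Real.log S.delta := by
    rw [Real.log_div (by positivity) hδ.ne', Real.log_mul (by positivity) hP0,
      Real.log_mul (by positivity) hm0, Real.log_mul (by positivity) hN0, Real.log_mul hT0 hd0]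
  have hL : Real.log ((S.T : ℝ) * S.N * S.m * S.P / S.delta) =
      Real.log S.T + Real.log S.N + Real.log S.m + Real.log S.P - Real.log S.delta := by
    rw [Real.log_div (by positivity) hδ.ne', Real.log_mul (by positivity) hP0,
      Real.log_mul (by positivity) hm0, Real.log_mul hT0 hN0]
  have hA : Real.log ((16 : ℝ) * S.N * S.m * S.P / S.delta) =
      Real.log 16 + Real.log S.N + Real.log S.m + Real.log S.P - Real.log S.delta := by
    rw [Real.log_div (by positivity) hδ.ne', Real.log_mul (by positivity) hP0,
      Real.log_mul (by positivity) hm0, Real.log_mul (by norm_num) hN0]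
  have hB : Real.log ((16 : ℝ) * S.N ^ 2 * S.P ^ 2 / S.delta) =
      Real.log 16 + 2 * Real.log S.N + 2 * Real.log S.P - Real.log S.delta := by
    rw [Real.log_div (by positivity) hδ.ne', Real.log_mul (by positivity) (by positivity),
      Real.log_mul (by norm_num) (by positivity), Real.log_pow, Real.log_pow]
    norm_num
  set L1 := Real.log ((S.T : ℝ) * S.d * S.N * S.m * S.P / S.delta)
  set L := Real.log ((S.T : ℝ) * S.N * S.m * S.P / S.delta)
  set A := Real.log ((16 : ℝ) * S.N * S.m * S.P / S.delta)
  set B := Real.log ((16 : ℝ) * S.N ^ 2 * S.P ^ 2 / S.delta)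
  have hL1pos : 2 / 3 ≤ L1 := by linarith
  have hLpos : 2 / 3 ≤ L := by linarith
  have hsA : √A ≤ 3 * L1 := sqrt_le_three_mul hL1pos (by linarith)
  have hsB : √B ≤ 3 * L := sqrt_le_three_mul hLpos (by linarith)
  have hlT : Real.log S.T ^ ((1 : ℝ) / 3) ≤ 5 / 2 * L := by
    have h1 : Real.log S.T ^ ((1 : ℝ) / 3) ≤ (1 + Real.log S.T) ^ ((1 : ℝ) / 3) := by
      gcongr; linarith
    have h2 : (1 + Real.log S.T) ^ ((1 : ℝ) / 3) ≤ (1 + Real.log S.T) ^ (1 : ℝ) :=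
      Real.rpow_le_rpow_of_exponent_le (by linarith) (by norm_num)
    rw [Real.rpow_one] at h2
    linarith
  set a := (S.m : ℝ) ^ ((1 : ℝ) / 3)
  set b := (S.P : ℝ) ^ ((1 : ℝ) / 3)
  have ha1 : 1 ≤ a := Real.one_le_rpow hm (by norm_num)
  have hb1 : 1 ≤ b := Real.one_le_rpow (by linarith) (by norm_num)
  have hfirst : 3 * S.sigma0 * S.sigman * √((S.d : ℝ) * A) ≤ 9 / (a * b) := by
    have ha2 : a ≤ (S.m : ℝ) ^ ((2 : ℝ) / 3) :=
      Real.rpow_le_rpow_of_exponent_le hm (by norm_num)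
    have hb2 : b ≤ (S.P : ℝ) ^ ((2 : ℝ) / 3) :=
      Real.rpow_le_rpow_of_exponent_le (by linarith) (by norm_num)
    have hσ0le : S.sigma0 ≤ 1 / (a * b * S.sigman * √(S.d : ℝ)) / L1 := by
      refine hs0.trans ?_
      gcongr
      refine (mul_le_of_le_one_left (by have := S.halpha; positivity)
        (inv_le_one_of_one_le₀ hC)).trans ?_
      refine ((min_le_left _ _).trans (min_le_left _ _)).trans ?_
      gcongr
    rw [Real.sqrt_mul (by positivity)]
    calc 3 * S.sigma0 * S.sigman * (√(S.d : ℝ) * √A)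
        ≤ 3 * (1 / (a * b * S.sigman * √(S.d : ℝ)) / L1) * S.sigman *
            (√(S.d : ℝ) * (3 * L1)) := by gcongr
      _ = 9 / (a * b) := by
        have : L1 ≠ 0 := by linarith
        field_simp
        norm_num
  have hsecond : 21 * S.pun * S.N * S.P * Real.log S.T ^ ((1 : ℝ) / 3) / √S.d * √B ≤
      158 / (a * b) := by
    have hb3 : b ≤ √C := by
      rw [Real.sqrt_eq_rpow]
      calc b ≤ (S.P : ℝ) ^ ((1 : ℝ) / 2) :=
            Real.rpow_le_rpow_of_exponent_le (by linarith) (by norm_num)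
        _ ≤ C ^ ((1 : ℝ) / 2) := by gcongr
    have ha3 : a ≤ S.m := by
      have := Real.rpow_le_rpow_of_exponent_le hm (show (1 : ℝ) / 3 ≤ 1 by norm_num)
      rwa [Real.rpow_one] at this
    have hsqd : a * b * (S.P * S.N * L ^ 2) ≤ √(S.d : ℝ) := by
      apply Real.le_sqrt_of_sq_le
      calc (a * b * (S.P * S.N * L ^ 2)) ^ 2 ≤ (S.m * √C * (S.P * S.N * L ^ 2)) ^ 2 := by gcongr
        _ = √C ^ 2 * S.m ^ 2 * S.P ^ 2 * S.N ^ 2 * L ^ 4 := by ring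
        _ ≤ S.d := by rwa [Real.sq_sqrt (by linarith)]
    have hpN := S.pun_mul_N_le
    have hp0 := S.pun_nonneg
    calc 21 * S.pun * S.N * S.P * Real.log S.T ^ ((1 : ℝ) / 3) / √S.d * √B
        = 21 * (S.pun * S.N) * S.P * Real.log S.T ^ ((1 : ℝ) / 3) / √S.d * √B := by ring
      _ ≤ 21 * S.N * S.P * (5 / 2 * L) / (a * b * (S.P * S.N * L ^ 2)) * (3 * L) := by
        gcongr
      _ = (315 / 2) / (a * b) := by
        have : L ≠ 0 := by linarith
        field_simp
        norm_num
      _ ≤ 158 / (a * b) := by gcongr; norm_num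
  calc _ ≤ 9 / (a * b) + 158 / (a * b) := add_le_add hfirst hsecond
    _ = 167 / (a * b) := by ring

/-- On a learnable sample the adversarial signal patch is `k u` with `0 ≤ y k ≤ α`. -/
theorem exists_xadv_sig_eq (t : ℕ) {i : Fin S.N} (hi : i ∈ S.SL) :
    ∃ k : ℝ, S.xadv t i (S.sig i) = k • e1 S.d S.hd ∧ 0 ≤ S.y i * k ∧ S.y i * k ≤ S.alpha := by
  obtain ⟨c, hc⟩ := S.hadvspan t i
  have hx : S.xadv t i (S.sig i) = ((1 + c) * (S.alpha * S.y i)) • e1 S.d S.hd := by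
    rw [sub_eq_iff_eq_add.mp hc, S.hsigL i hi, smul_smul, ← add_smul]
    ring_nf
  have hdot : dot (S.xadv t i (S.sig i)) (e1 S.d S.hd) = (1 + c) * (S.alpha * S.y i) := by
    rw [hx]; simp [dot, e1]
  obtain ⟨h1, h2⟩ := S.hadvlearn t i hi
  rw [hdot] at h1 h2
  exact ⟨_, hx, by linarith [S.hepsalpha], h2⟩

/-- If all signal weights are at most `C₀ / (α m^{1/3})` and all noise correlations are at most
`C₀ / (m P)^{1/3}`, then the adversarial margin of a learnable sample is at most `2 C₀³`. -/
theorem marg_le {C0 : ℝ} (hC0 : 0 ≤ C0) (t : ℕ) {i : Fin S.N} (hi : i ∈ S.SL)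
    (hsignal : ∀ r, S.wsig t r ≤ C0 / (S.alpha * (S.m : ℝ) ^ ((1 : ℝ) / 3)))
    (hnoise : ∀ r, ∀ j, j ≠ S.sig i → |dot (S.w t r) (S.x i j)| ≤
      C0 / ((S.m : ℝ) ^ ((1 : ℝ) / 3) * (S.P : ℝ) ^ ((1 : ℝ) / 3))) :
    S.marg t i ≤ 2 * C0 ^ 3 := by
  have hm : (0 : ℝ) < S.m := by exact_mod_cast S.hm
  have hP : (0 : ℝ) < S.P := by exact_mod_cast S.hP
  have hα := S.halpha
  have hcube : StrictMono fun z : ℝ => z ^ 3 := Odd.strictMono_pow (by decide)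
  have hterm : ∀ r p, S.y i * dot (S.w t r) (S.xadv t i p) ^ 3 ≤
      (if p = S.sig i then C0 ^ 3 / S.m else 0) + C0 ^ 3 / (S.m * S.P) := by
    intro r p
    rw [sign_mul_cube (S.hy i)]
    by_cases hp : p = S.sig i
    · subst hp
      obtain ⟨k, hk, hk0, hk1⟩ := S.exists_xadv_sig_eq t hi
      have hw : S.y i * dot (S.w t r) (S.xadv t i (S.sig i)) ≤
          C0 / (S.m : ℝ) ^ ((1 : ℝ) / 3) := by
        rw [hk, dot_smul_e1, ← mul_assoc]
        calc S.y i * k * S.wsig t r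
            ≤ S.y i * k * (C0 / (S.alpha * (S.m : ℝ) ^ ((1 : ℝ) / 3))) := by
              gcongr; exact hsignal r
          _ ≤ S.alpha * (C0 / (S.alpha * (S.m : ℝ) ^ ((1 : ℝ) / 3))) := by gcongr
          _ = C0 / (S.m : ℝ) ^ ((1 : ℝ) / 3) := by field_simp
      have h3 : _ ≤ (C0 / (S.m : ℝ) ^ ((1 : ℝ) / 3)) ^ 3 := hcube.monotone hw
      rw [div_pow, cbrt_pow_three hm.le] at h3
      rw [if_pos rfl]
      exact h3.trans (le_add_of_nonneg_right (by positivity))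
    · rw [if_neg hp, zero_add, S.hadvnoise t i p hp]
      have hz : S.y i * dot (S.w t r) (S.x i p) ≤
          C0 / ((S.m : ℝ) ^ ((1 : ℝ) / 3) * (S.P : ℝ) ^ ((1 : ℝ) / 3)) := by
        refine (le_abs_self _).trans ?_
        have hy : |S.y i| = 1 := by rcases S.hy i with h | h <;> simp [h]
        rw [abs_mul, hy, one_mul]
        exact hnoise r p hp
      have h3 : _ ≤ (C0 / ((S.m : ℝ) ^ ((1 : ℝ) / 3) * (S.P : ℝ) ^ ((1 : ℝ) / 3))) ^ 3 :=
        hcube.monotone hz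
      rwa [div_pow, mul_pow (_ ^ ((1 : ℝ) / 3)), cbrt_pow_three hm.le,
        cbrt_pow_three hP.le] at h3
  calc S.marg t i = ∑ r, ∑ p, S.y i * dot (S.w t r) (S.xadv t i p) ^ 3 := by
        simp only [marg, netOut, phi_sub_phi_neg, Finset.mul_sum]
    _ ≤ ∑ _r : Fin S.m, ∑ p : Fin S.P,
          ((if p = S.sig i then C0 ^ 3 / (S.m : ℝ) else 0) + C0 ^ 3 / (S.m * S.P)) :=
        Finset.sum_le_sum fun r _ => Finset.sum_le_sum fun p _ => hterm r p
    _ = 2 * C0 ^ 3 := by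
        simp only [Finset.sum_add_distrib, Finset.sum_ite_eq', Finset.mem_univ, if_true,
          Finset.sum_const, Finset.card_univ, Fintype.card_fin, nsmul_eq_mul]
        field_simp
        norm_num

end Setting

/-- Gradient bound on learnable samples. On the event `E`, under
Condition (H), if the noise-stability bound holds at iteration `t` and all signal
weights are below `C₀/(α m^{1/3})`, then on every learnable sample the negative
sigmoid of the adversarial margin is bounded between `1/(1+exp(2C₀³))` and `1`. -/
theorem stmt3 :
    ∃ C0 C : ℝ, 0 < C0 ∧ 0 < C ∧
      ∀ S : Setting, S.ATDyn → S.EventE → S.CondH C → (S.SU.Nonempty → S.SparseRegime C) →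
        ∀ t : ℕ, S.NS t →
          (∀ r, S.wsig t r ≤ C0 / (S.alpha * (S.m : ℝ) ^ ((1 : ℝ) / 3))) →
          ∀ i ∈ S.SL,
            1 / (1 + Real.exp (2 * C0 ^ 3)) ≤ psi (S.marg t i) ∧ psi (S.marg t i) ≤ 1 := by
  refine ⟨200, 200, by norm_num, by norm_num, ?_⟩
  intro S _ _ hH _ t hNS hsignal i hi
  refine ⟨psi_anti (S.marg_le (by norm_num) t hi hsignal fun r j hj => ?_), psi_le_one _⟩
  refine ((hNS r i hi j hj).trans (S.noise_bound_le hH)).trans ?_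
  gcongr
  norm_num

end AD

end
end
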